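/- Fix constants 0 < q < p ≤ 1. There exist constants L > 0 and L₂ > 0 such that for all n ∈ ℕ and all integers Δ with 1 ≤ Δ ≤ n/L₂, the following holds: if T ~ Bin(n+Δ, q), S ~ Bin(n, q), D₋ ~ Bin(n−1, p) and D₊ ~ Bin(n+Δ−1, p) are independent, then P[T > D₋] ≥ (1 + 1/L)·P[S > D₊]. -/

import Mathlib

/-!
Both probabilities are expectations of the indicator of `d < t`, which increases in `t` and
decreases in `d`, so adding a trial to the first variable raises the probability and adding a trial
to the second one lowers it (`binomE_mono`, `binomE_anti`). Hence it suffices to treat `Δ = 1`.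

Write `n = m + 1`, `X ~ Bin(m + 1, q)`, `Y ~ Bin(m, p)`, and put `a = P[X ≥ Y]`, `b = P[X > Y]`,
`c = P[X ≥ Y + 2]`. Conditioning on the one extra trial (`binomE_succ`) gives
`P[Bin(m + 2, q) > Y] = b + q (a - b)` and `P[X > Bin(m + 1, p)] = b - p (b - c)`. Since `q < p`,
the difference is at least `q (a - c)`.

The joint mass function `f` of `(X, Y)` satisfies `f (x + 1, y) ≤ θ f (x, y + 1)` whenever
`y + 1 ≤ x`, where `θ = q (1 - p) / (p (1 - q)) < 1` (`binomPMF_mul_shift`). Summing over such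
pairs gives `c ≤ θ a` (`tail_le`), so the difference is at least `q (1 - θ) a`, while the smaller
probability is at most `a`. This gives the claim with `1 / L = q (1 - θ)` and `L₂ = 1`.
-/

open Finset

/-- Probability mass function of the binomial distribution `Bin(m, r)`. -/
noncomputable def binomPMF (m : ℕ) (r : ℝ) (k : ℕ) : ℝ :=
  (m.choose k : ℝ) * r ^ k * (1 - r) ^ (m - k)

/-- `P[X ∈ P]` for `X ~ Bin(m, r)`. -/
noncomputable def binomProb (m : ℕ) (r : ℝ) (P : ℕ → Prop) : ℝ :=
  ∑ k ∈ Finset.range (m + 1), Set.indicator {k | P k} (binomPMF m r) k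

/-- `P[(X, Y) ∈ P]` for independent `X ~ Bin(m₁, r₁)` and `Y ~ Bin(m₂, r₂)`. -/
noncomputable def binomProb2 (m₁ : ℕ) (r₁ : ℝ) (m₂ : ℕ) (r₂ : ℝ) (P : ℕ → ℕ → Prop) : ℝ :=
  ∑ j ∈ Finset.range (m₁ + 1), ∑ k ∈ Finset.range (m₂ + 1),
    Set.indicator {jk : ℕ × ℕ | P jk.1 jk.2}
      (fun jk => binomPMF m₁ r₁ jk.1 * binomPMF m₂ r₂ jk.2) (j, k)

/-- Expectation of `g` under the binomial distribution `Bin(m, r)`. -/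
noncomputable def binomE (m : ℕ) (r : ℝ) (g : ℕ → ℝ) : ℝ :=
  ∑ k ∈ range (m + 1), binomPMF m r k * g k

lemma binomPMF_nonneg {r : ℝ} (h0 : 0 ≤ r) (h1 : r ≤ 1) (m k : ℕ) : 0 ≤ binomPMF m r k := by
  have : 0 ≤ 1 - r := by linarith
  unfold binomPMF
  positivity

/-- Pascal's rule for the mass function. -/
lemma binomPMF_succ_succ (m k : ℕ) (r : ℝ) :
    binomPMF (m + 1) r (k + 1) = r * binomPMF m r k + (1 - r) * binomPMF m r (k + 1) := by
  unfold binomPMF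
  rcases lt_or_ge k m with h | h
  · obtain ⟨d, rfl⟩ := Nat.exists_eq_add_of_lt h
    rw [Nat.choose_succ_succ, show k + d + 1 + 1 - (k + 1) = d + 1 by omega,
      show k + d + 1 - k = d + 1 by omega, show k + d + 1 - (k + 1) = d by omega]
    push_cast
    ring
  · rw [Nat.choose_succ_succ, Nat.choose_eq_zero_of_lt (show m < k + 1 by omega),
      show m + 1 - (k + 1) = m - k by omega]
    push_cast
    ring

/-- Conditioning on the last trial. -/
lemma binomE_succ (m : ℕ) (r : ℝ) (g : ℕ → ℝ) :
    binomE (m + 1) r g = binomE m r (fun k => (1 - r) * g k + r * g (k + 1)) := by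
  unfold binomE
  have h0 : binomPMF (m + 1) r 0 = (1 - r) * binomPMF m r 0 := by
    simp [binomPMF, pow_succ, mul_comm]
  have htop : binomPMF m r (m + 1) = 0 := by simp [binomPMF]
  have hs : ∑ k ∈ range (m + 1), binomPMF m r (k + 1) * g (k + 1) + binomPMF m r 0 * g 0
      = ∑ k ∈ range (m + 1), binomPMF m r k * g k := by
    rw [← sum_range_succ' (fun k => binomPMF m r k * g k), sum_range_succ, htop]
    ring
  rw [sum_range_succ', h0]
  calc _ = r * ∑ k ∈ range (m + 1), binomPMF m r k * g (k + 1)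
        + (1 - r) * (∑ k ∈ range (m + 1), binomPMF m r (k + 1) * g (k + 1)
          + binomPMF m r 0 * g 0) := by
        rw [mul_add, mul_sum, mul_sum, ← add_assoc, ← sum_add_distrib]
        congr 1
        · refine sum_congr rfl fun k _ => ?_
          rw [binomPMF_succ_succ]
          ring
        · ring
    _ = _ := by
        rw [hs, mul_sum, mul_sum, ← sum_add_distrib]
        refine sum_congr rfl fun k _ => ?_
        ring

lemma binomE_le {r : ℝ} (h0 : 0 ≤ r) (h1 : r ≤ 1) (m : ℕ) {g h : ℕ → ℝ} (hgh : ∀ k, g k ≤ h k) :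
    binomE m r g ≤ binomE m r h :=
  sum_le_sum fun k _ => mul_le_mul_of_nonneg_left (hgh k) (binomPMF_nonneg h0 h1 m k)

lemma binomE_nonneg {r : ℝ} (h0 : 0 ≤ r) (h1 : r ≤ 1) (m : ℕ) {g : ℕ → ℝ} (hg : ∀ k, 0 ≤ g k) :
    0 ≤ binomE m r g :=
  sum_nonneg fun k _ => mul_nonneg (binomPMF_nonneg h0 h1 m k) (hg k)

lemma binomE_lin (m : ℕ) (r u v : ℝ) (g h : ℕ → ℝ) :
    binomE m r (fun k => u * g k + v * h k) = u * binomE m r g + v * binomE m r h := by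
  unfold binomE
  rw [mul_sum, mul_sum, ← sum_add_distrib]
  refine sum_congr rfl fun k _ => ?_
  ring

lemma binomE_mono {r : ℝ} (h0 : 0 ≤ r) (h1 : r ≤ 1) {g : ℕ → ℝ} (hg : ∀ k, g k ≤ g (k + 1)) :
    Monotone fun m => binomE m r g := by
  refine monotone_nat_of_le_succ fun m => ?_
  rw [binomE_succ]
  exact binomE_le h0 h1 m fun k => by nlinarith [hg k]

lemma binomE_anti {r : ℝ} (h0 : 0 ≤ r) (h1 : r ≤ 1) {g : ℕ → ℝ} (hg : ∀ k, g (k + 1) ≤ g k) :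
    Antitone fun m => binomE m r g := by
  refine antitone_nat_of_succ_le fun m => ?_
  rw [binomE_succ]
  exact binomE_le h0 h1 m fun k => by nlinarith [hg k]

lemma binomProb2_eq (m₁ m₂ : ℕ) (r₁ r₂ : ℝ) (P : ℕ → ℕ → Prop) [∀ j k, Decidable (P j k)] :
    binomProb2 m₁ r₁ m₂ r₂ P =
      binomE m₁ r₁ (fun j => binomE m₂ r₂ (fun k => if P j k then 1 else 0)) := by
  unfold binomProb2 binomE
  refine sum_congr rfl fun j _ => ?_
  rw [mul_sum]
  refine sum_congr rfl fun k _ => ?_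
  by_cases h : P j k <;> simp [h]

lemma choose_mul_shift {m x y : ℕ} (hx : x ≤ m) (hy : y + 1 ≤ x) :
    (m + 1).choose (x + 1) * m.choose y ≤ (m + 1).choose x * m.choose (y + 1) := by
  have e1 := Nat.choose_succ_right_eq (m + 1) x
  have e2 := Nat.choose_succ_right_eq m y
  refine Nat.le_of_mul_le_mul_right (c := (x + 1) * (y + 1)) ?_ (by positivity)
  calc (m + 1).choose (x + 1) * m.choose y * ((x + 1) * (y + 1))
      = ((m + 1).choose (x + 1) * (x + 1)) * (m.choose y * (y + 1)) := by ring
    _ = ((m + 1).choose x * m.choose y) * ((m + 1 - x) * (y + 1)) := by rw [e1]; ring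
    _ ≤ ((m + 1).choose x * m.choose y) * ((m - y) * (x + 1)) :=
        Nat.mul_le_mul_left _ (Nat.mul_le_mul (by omega) (by omega))
    _ = (m + 1).choose x * (m.choose y * (m - y)) * (x + 1) := by ring
    _ = _ := by rw [← e2]; ring

/-- Compares the weights of `(x + 1, y)` and `(x, y + 1)`. The powers differ exactly by the factor
`q (1 - p) / (p (1 - q))`, and the binomial coefficients can only favour the second pair, which is
closer to the diagonal. -/
lemma binomPMF_mul_shift {p q : ℝ} (hq : 0 < q) (hqp : q < p) (hp : p ≤ 1) {m x y : ℕ}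
    (hx : x ≤ m) (hy : y + 1 ≤ x) :
    binomPMF (m + 1) q (x + 1) * binomPMF m p y ≤
      q * (1 - p) / (p * (1 - q)) * (binomPMF (m + 1) q x * binomPMF m p (y + 1)) := by
  have hc : ((m + 1).choose (x + 1) : ℝ) * m.choose y ≤ (m + 1).choose x * m.choose (y + 1) := by
    exact_mod_cast choose_mul_shift hx hy
  have hp0 : 0 < p := hq.trans hqp
  have hq1 : 0 < 1 - q := by linarith
  have hp1 : 0 ≤ 1 - p := by linarith
  have ex1 : (1 - q) ^ (m + 1 - x) = (1 - q) ^ (m - x) * (1 - q) := by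
    rw [← pow_succ]; congr 1; omega
  have ex2 : (1 - p) ^ (m - y) = (1 - p) ^ (m - (y + 1)) * (1 - p) := by
    rw [← pow_succ]; congr 1; omega
  unfold binomPMF
  rw [ex1, ex2, show m + 1 - (x + 1) = m - x by omega]
  set w := q ^ x * (1 - q) ^ (m - x) * p ^ y * (1 - p) ^ (m - (y + 1)) * (q * (1 - p)) with hw
  have hw0 : 0 ≤ w := by positivity
  calc _ = ((m + 1).choose (x + 1) : ℝ) * m.choose y * w := by rw [hw]; ring
    _ ≤ (m + 1).choose x * m.choose (y + 1) * w := mul_le_mul_of_nonneg_right hc hw0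
    _ = _ := by rw [hw]; field_simp; ring

/-- `P[X ≥ Y + 2] ≤ θ P[X ≥ Y]` for `X ~ Bin(m + 1, q)` and `Y ~ Bin(m, p)`. -/
lemma tail_le {p q : ℝ} (hq : 0 < q) (hqp : q < p) (hp : p ≤ 1) (m : ℕ) :
    binomE (m + 1) q (fun s => binomE m p (fun d => if d + 1 < s then 1 else 0)) ≤
      q * (1 - p) / (p * (1 - q)) *
        binomE (m + 1) q (fun s => binomE m p (fun d => if d < s + 1 then 1 else 0)) := by
  have hp0 : 0 < p := hq.trans hqp
  have hq1 : 0 < 1 - q := by linarith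
  have hp1 : 0 ≤ 1 - p := by linarith
  have hf : ∀ x y, 0 ≤ binomPMF (m + 1) q x * (binomPMF m p y * if y < x + 1 then 1 else 0) := by
    intro x y
    have h1 := binomPMF_nonneg hq.le (by linarith) (m + 1) x
    have h2 := binomPMF_nonneg hp0.le hp m y
    positivity
  unfold binomE
  simp only [mul_sum]
  -- The terms with `x = 0` or `y = m` vanish on the left; on the right, `x = m + 1` and `y = 0`
  -- are discarded, and the remaining terms correspond under `(x + 1, y) ↦ (x, y + 1)`.
  rw [sum_range_succ', sum_range_succ _ (m + 1)]
  refine add_le_add (sum_le_sum fun x hx => ?_) ?_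
  · have hx' : x ≤ m := by have := mem_range.1 hx; omega
    rw [sum_range_succ, sum_range_succ']
    refine add_le_add (sum_le_sum fun y hy => ?_) ?_
    · by_cases h : y + 1 ≤ x
      · rw [if_pos (by omega), mul_one, mul_one]
        exact binomPMF_mul_shift hq hqp hp hx' h
      · rw [if_neg (by omega)]
        simp
    · rw [if_neg (by omega), mul_zero, mul_zero]
      exact mul_nonneg (by positivity) (hf x 0)
  · simp only [Nat.not_lt_zero, if_false, mul_zero, sum_const_zero]
    exact sum_nonneg fun y _ => mul_nonneg (by positivity) (hf _ y)

/-- equation (3.3) / `eq:Ratio_p_rp_l` in Lemma 3.6.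
Fix constants `0 < q < p ≤ 1`.  There exist constants `L > 0` and `L₂ > 0` such that for all
`n ∈ ℕ` and all integers `Δ` with `1 ≤ Δ ≤ n/L₂`: if `T ~ Bin(n+Δ, q)`, `S ~ Bin(n, q)`,
`D₋ ~ Bin(n−1, p)` and `D₊ ~ Bin(n+Δ−1, p)` are independent, then
`P[T > D₋] ≥ (1 + 1/L)·P[S > D₊]`. -/
theorem binomial_cross_tail_ratio_bound
    (p q : ℝ) (hq : 0 < q) (hqp : q < p) (hp : p ≤ 1) :
    ∃ L : ℝ, 0 < L ∧ ∃ L₂ : ℝ, 0 < L₂ ∧ ∀ n : ℕ, ∀ Δ : ℕ, 1 ≤ Δ → (Δ : ℝ) ≤ (n : ℝ) / L₂ →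
      binomProb2 (n + Δ) q (n - 1) p (fun t d => d < t)
        ≥ (1 + 1 / L) * binomProb2 n q (n + Δ - 1) p (fun s d => d < s) := by
  have hp0 : 0 < p := hq.trans hqp
  have hq1 : 0 < 1 - q := by linarith
  have hp1 : 0 ≤ 1 - p := by linarith
  have hq1' : q ≤ 1 := by linarith
  set θ := q * (1 - p) / (p * (1 - q)) with hθ
  have hθ1 : θ < 1 := by
    rw [hθ, div_lt_one (by positivity)]
    linarith
  have hL : 0 < q * (1 - θ) := mul_pos hq (by linarith)
  refine ⟨1 / (q * (1 - θ)), by positivity, 1, one_pos, fun n Δ hΔ hn => ?_⟩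
  have hn' : Δ ≤ n := by rw [div_one] at hn; exact_mod_cast hn
  obtain ⟨m, rfl⟩ : ∃ m, n = m + 1 := ⟨n - 1, by omega⟩
  rw [ge_iff_le, binomProb2_eq, binomProb2_eq, one_div_one_div, Nat.add_sub_cancel]
  have hle : ∀ {P Q : ℕ → ℕ → Prop} [∀ j k, Decidable (P j k)] [∀ j k, Decidable (Q j k)],
      (∀ j k, P j k → Q j k) → ∀ j k, (if P j k then (1 : ℝ) else 0) ≤ if Q j k then 1 else 0 := by
    intro P Q _ _ h j k
    by_cases hP : P j k
    · simp [hP, h j k hP]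
    · rw [if_neg hP]; positivity
  set a := binomE (m + 1) q (fun s => binomE m p (fun d => if d < s + 1 then 1 else 0)) with ha
  set b := binomE (m + 1) q (fun s => binomE m p (fun d => if d < s then 1 else 0)) with hb
  set c := binomE (m + 1) q (fun s => binomE m p (fun d => if d + 1 < s then 1 else 0)) with hc
  have hba : b ≤ a := binomE_le hq.le hq1' _ fun s => binomE_le hp0.le hp _ fun d =>
    hle (P := fun s d => d < s) (Q := fun s d => d < s + 1) (fun _ _ h => by omega) s d
  have hcb : c ≤ b := binomE_le hq.le hq1' _ fun s => binomE_le hp0.le hp _ fun d =>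
    hle (P := fun s d => d + 1 < s) (Q := fun s d => d < s) (fun _ _ h => by omega) s d
  have hca : c ≤ θ * a := tail_le hq hqp hp m
  have hT : (1 - q) * b + q * a ≤
      binomE (m + 1 + Δ) q (fun t => binomE m p (fun d => if d < t then 1 else 0)) := by
    rw [hb, ha, ← binomE_lin, ← binomE_succ (m + 1) q
      (fun t => binomE m p (fun d => if d < t then 1 else 0))]
    refine binomE_mono hq.le hq1' (fun s => binomE_le hp0.le hp _ fun d =>
      hle (P := fun s d => d < s) (Q := fun s d => d < s + 1) (fun _ _ h => by omega) s d) ?_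
    omega
  have hS : binomE (m + 1) q (fun s => binomE (m + 1 + Δ - 1) p (fun d => if d < s then 1 else 0))
      ≤ (1 - p) * b + p * c := by
    rw [hb, hc, ← binomE_lin]
    refine binomE_le hq.le hq1' _ fun s => ?_
    rw [← binomE_lin, ← binomE_succ m p (fun d => if d < s then 1 else 0)]
    refine binomE_anti hp0.le hp (fun d =>
      hle (P := fun s d => d + 1 < s) (Q := fun s d => d < s) (fun _ _ h => by omega) s d) ?_
    omega
  set R := binomE (m + 1) q
    (fun s => binomE (m + 1 + Δ - 1) p (fun d => if d < s then 1 else 0))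
  have hRa : R ≤ a := by nlinarith
  calc (1 + q * (1 - θ)) * R = R + q * (1 - θ) * R := by ring
    _ ≤ ((1 - p) * b + p * c) + q * (1 - θ) * a :=
        add_le_add hS (mul_le_mul_of_nonneg_left hRa hL.le)
    _ ≤ (1 - q) * b + q * a := by nlinarith
    _ ≤ _ := hT
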